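/- arXiv:2502.08153 — 3 statements merged into one kernel-verified Lean document; each statement's English description precedes it below -/
import Mathlib

section
/- Let R be a Noetherian regular integral domain and let a, b be nonzero elements of R such that the principal divisors div(a) and div(b) on Spec(R) have no common prime divisor (equivalently, there is no height-one prime ideal of R containing both a and b). Then the ideal of R[t] generated by a·t + b is a prime ideal. -/
/-- A commutative noetherian local ring is regular if its maximal ideal is generated by
`dim` many elements, where `dim` is the Krull dimension. -/
def IsRegularLocal (A : Type*) [CommRing A] [IsLocalRing A] : Prop :=
  ∃ s : Finset A, Ideal.span (s : Set A) = IsLocalRing.maximalIdeal A ∧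
    (s.card : WithBot ℕ∞) = ringKrullDim A

/-!
If `b` is a nonzerodivisor modulo `a`, then `a` is a nonzerodivisor modulo `a X + b`. Since
`a ^ n * f` is congruent to a constant modulo `a X + b`, every polynomial vanishing at `-b / a` is
then a multiple of `a X + b`, so that `(a X + b)` is the kernel of a map to the fraction field.

The zero divisors modulo `a` are the elements of the associated primes of `R / (a)`. In a regular
ring these have height at most one: after localizing, the maximal ideal is `(a : d)`, any element
`x` of it outside its square is prime, and cancelling `a` shows that `x` generates it.
-/

open IsLocalRing Polynomial nonZeroDivisors

section LinearPolynomial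

theorem dvd_of_dvd_mul_of_forall_dvd_of_dvd_mul {M : Type*} [CommMonoidWithZero M]
    [IsLeftCancelMulZero M] {x y z : M} (hx : x ≠ 0) (h : ∀ w, x ∣ y * w → x ∣ w)
    (hz : y ∣ x * z) : y ∣ z := by
  obtain ⟨w, hw⟩ := hz
  obtain ⟨v, rfl⟩ := h w ⟨z, hw.symm⟩
  exact ⟨v, mul_left_cancel₀ hx (by rw [hw, mul_left_comm])⟩

variable {R : Type*} [CommRing R]

theorem C_mul_X_add_C_dvd_C_pow_mul_sub (a b : R) (f : R[X]) :
    C a * X + C b ∣ C a ^ f.natDegree * f - C ((f.scaleRoots a).eval (-b)) := by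
  have h := sub_dvd_eval_sub (C a * X) (C (-b)) ((f.scaleRoots a).map C)
  rwa [C_neg, sub_neg_eq_add, ← C_neg, eval_map, scaleRoots_eval₂_mul, eval₂_C_X, eval_map,
    eval₂_at_apply] at h

variable [IsDomain R] {a b : R}

theorem C_mul_X_add_C_dvd_of_dvd_C_pow_mul (ha : a ≠ 0) (hab : ∀ c, a ∣ b * c → a ∣ c)
    {f : R[X]} {n : ℕ} (hf : C a * X + C b ∣ C a ^ n * f) : C a * X + C b ∣ f := by
  have hmod (g : R[X]) (hg : C a ∣ (C a * X + C b) * g) : C a ∣ g := by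
    rw [add_mul, mul_assoc, dvd_add_right (dvd_mul_right _ _)] at hg
    simp only [C_dvd_iff_dvd_coeff, coeff_C_mul] at hg ⊢
    exact fun i ↦ hab _ (hg i)
  induction n with
  | zero => simpa only [pow_zero, one_mul] using hf
  | succ n ih =>
    rw [pow_succ', mul_assoc] at hf
    exact ih (dvd_of_dvd_mul_of_forall_dvd_of_dvd_mul (C_ne_zero.mpr ha) hmod hf)

theorem ker_aeval_neg_div_eq_span_C_mul_X_add_C {K : Type*} [Field K] [Algebra R K]
    [FaithfulSMul R K] (ha : a ≠ 0) (hab : ∀ c, a ∣ b * c → a ∣ c) :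
    RingHom.ker (aeval (R := R) (algebraMap R K (-b) / algebraMap R K a)) =
      Ideal.span {C a * X + C b} := by
  have hinj := FaithfulSMul.algebraMap_injective R K
  refine le_antisymm (fun f hf ↦ Ideal.mem_span_singleton.mpr ?_) ?_
  · have hroot := scaleRoots_aeval_eq_zero_of_aeval_div_eq_zero hinj hf
      (mem_nonZeroDivisors_of_ne_zero ha)
    rw [aeval_algebraMap_apply, map_eq_zero_iff _ hinj, coe_aeval_eq_eval] at hroot
    have hdvd := C_mul_X_add_C_dvd_C_pow_mul_sub a b f
    rw [hroot, C_0, sub_zero] at hdvd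
    exact C_mul_X_add_C_dvd_of_dvd_C_pow_mul ha hab hdvd
  · have haK : algebraMap R K a ≠ 0 := (map_ne_zero_iff _ hinj).mpr ha
    rw [Ideal.span_singleton_le_iff_mem, RingHom.mem_ker]
    simp [mul_div_cancel₀, haK]

theorem isPrime_span_C_mul_X_add_C (ha : a ≠ 0) (hab : ∀ c, a ∣ b * c → a ∣ c) :
    (Ideal.span {C a * X + C b}).IsPrime := by
  rw [← ker_aeval_neg_div_eq_span_C_mul_X_add_C (K := FractionRing R) ha hab]
  exact RingHom.ker_isPrime _

end LinearPolynomial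

section LocalRing

theorem isDomain_of_isPrime_span_singleton_of_forall_notMem_minimalPrimes {R : Type*} [CommRing R]
    [IsNoetherianRing R] {x : R} (hxj : x ∈ Ideal.jacobson (⊥ : Ideal R))
    (hxp : (Ideal.span {x}).IsPrime) (hx : ∀ p ∈ minimalPrimes R, x ∉ p) : IsDomain R := by
  obtain ⟨p, hp, hpx⟩ := Ideal.exists_minimalPrimes_le (bot_le : ⊥ ≤ Ideal.span {x})
  have hprime : p.IsPrime := hp.isPrime
  -- As `p` lies in `(x)` but does not contain `x`, it equals `x p`: Nakayama applies.
  have hle : p ≤ Ideal.span {x} • p := fun z hz ↦ by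
    obtain ⟨w, rfl⟩ := Ideal.mem_span_singleton.mp (hpx hz)
    exact Ideal.mul_mem_mul (Ideal.mem_span_singleton_self x)
      ((hprime.mem_or_mem hz).resolve_left (hx p hp))
  have hbot : p = ⊥ := Submodule.eq_bot_of_le_smul_of_le_jacobson_bot _ p
    (IsNoetherian.noetherian _) hle ((Ideal.span_singleton_le_iff_mem _).mpr hxj)
  have : (⊥ : Ideal R).IsPrime := hbot ▸ hprime
  exact .of_bot_isPrime R

variable {R : Type*} [CommRing R] [IsLocalRing R]

theorem isLocalRing_quotient_span_singleton {x : R} (hx : x ∈ maximalIdeal R) :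
    IsLocalRing (R ⧸ Ideal.span {x}) := by
  have : Nontrivial (R ⧸ Ideal.span {x}) := Ideal.Quotient.nontrivial_iff.mpr
    ((Ideal.span_singleton_le_iff_mem _).mpr hx |>.trans_lt
      (maximalIdeal.isMaximal R).ne_top.lt_top).ne
  exact .of_surjective' (Ideal.Quotient.mk _) Ideal.Quotient.mk_surjective

theorem isField_of_maximalIdeal_le_sq [IsNoetherianRing R]
    (h : maximalIdeal R ≤ maximalIdeal R ^ 2) : IsField R :=
  subsingleton_cotangentSpace_iff.mp <| (maximalIdeal R).cotangent_subsingleton_iff.mpr <|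
    le_antisymm Ideal.mul_le_right (by rwa [← pow_two])

theorem exists_mem_maximalIdeal_notMem_sq_notMem_minimalPrimes [IsNoetherianRing R]
    (h : maximalIdeal R ∉ minimalPrimes R) :
    ∃ x ∈ maximalIdeal R, x ∉ maximalIdeal R ^ 2 ∧ ∀ p ∈ minimalPrimes R, x ∉ p := by
  have hsq : ¬ maximalIdeal R ≤ maximalIdeal R ^ 2 := fun hle ↦ h <| by
    have hbot := isField_iff_maximalIdeal_eq.mp (isField_of_maximalIdeal_le_sq hle)
    exact ⟨⟨inferInstance, bot_le⟩, fun _ _ _ ↦ hbot ▸ bot_le⟩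
  have hmin (p) (hp : p ∈ minimalPrimes R) : ¬ maximalIdeal R ≤ p := fun hle ↦
    h (le_antisymm hle (le_maximalIdeal hp.isPrime.ne_top) ▸ hp)
  have havoid := (Ideal.subset_union_prime_finite (f := id) (I := maximalIdeal R)
    ((minimalPrimes.finite_of_isNoetherianRing R).insert (maximalIdeal R ^ 2))
    (maximalIdeal R ^ 2) (maximalIdeal R ^ 2)
    fun p hp hne _ ↦ (hp.resolve_left hne).isPrime).not.mpr (by simpa [hsq] using hmin)
  obtain ⟨x, hx, hxn⟩ := Set.not_subset.mp havoid
  simp only [Set.biUnion_insert, id, Set.mem_union, Set.mem_iUnion, not_or, not_exists] at hxn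
  exact ⟨x, hx, hxn⟩

theorem exists_maximalIdeal_eq_span_insert_sdiff {s : Set R} (hs : Ideal.span s = maximalIdeal R)
    {x : R} (hx : x ∈ maximalIdeal R) (hx2 : x ∉ maximalIdeal R ^ 2) :
    ∃ y ∈ s, maximalIdeal R = Ideal.span (insert x (s \ {y})) := by
  classical
  have hsm : s ⊆ maximalIdeal R := hs ▸ Ideal.subset_span
  obtain ⟨c, hcs, rfl⟩ := Submodule.mem_span_set.mp (hs ▸ hx : x ∈ Ideal.span s)
  obtain ⟨y, hy, hunit⟩ : ∃ y ∈ c.support, IsUnit (c y) := by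
    by_contra! h
    refine hx2 (Ideal.sum_mem _ fun y hy ↦ ?_)
    rw [pow_two]
    exact Ideal.mul_mem_mul ((mem_maximalIdeal _).mpr (h y hy)) (hsm (hcs hy))
  set x := c.sum fun z r ↦ r • z
  set J := Ideal.span (insert x (s \ {y}))
  have hother (z : R) (hz : z ∈ s) (hzy : z ≠ y) : z ∈ J := Ideal.subset_span (Or.inr ⟨hz, hzy⟩)
  have hyJ : y ∈ J := by
    rw [← Ideal.unit_mul_mem_iff_mem J hunit,
      eq_sub_of_add_eq (Finset.add_sum_erase c.support (fun z ↦ c z * z) hy)]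
    refine J.sub_mem (Ideal.subset_span (Or.inl rfl)) (J.sum_mem fun z hz ↦ J.mul_mem_left _ ?_)
    obtain ⟨hzy, hz⟩ := Finset.mem_erase.mp hz
    exact hother z (hcs hz) hzy
  refine ⟨y, hcs hy, le_antisymm ?_ ?_⟩
  · rw [← hs, Ideal.span_le]
    intro z hz
    obtain rfl | hzy := eq_or_ne z y
    exacts [hyJ, hother z hz hzy]
  · exact Ideal.span_le.mpr (Set.insert_subset hx (Set.sdiff_subset.trans hsm))

theorem spanFinrank_maximalIdeal_quotient_span_singleton_lt [IsNoetherianRing R] {x : R}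
    (hx : x ∈ maximalIdeal R) (hx2 : x ∉ maximalIdeal R ^ 2) [IsLocalRing (R ⧸ Ideal.span {x})] :
    (maximalIdeal (R ⧸ Ideal.span {x})).spanFinrank < (maximalIdeal R).spanFinrank := by
  obtain ⟨s, hcard, hs⟩ :=
    Submodule.FG.exists_span_finset_card_eq_spanFinrank (maximalIdeal R).fg_of_isNoetherianRing
  obtain ⟨y, hy, hm⟩ := exists_maximalIdeal_eq_span_insert_sdiff hs hx hx2
  let f := Ideal.Quotient.mk (Ideal.span {x})
  have hgen : maximalIdeal (R ⧸ Ideal.span {x}) = Ideal.span (f '' (s \ {y})) := by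
    rw [← map_maximalIdeal_of_surjective f Ideal.Quotient.mk_surjective, hm, Ideal.map_span,
      Set.image_insert_eq, Ideal.Quotient.eq_zero_iff_mem.mpr (Ideal.mem_span_singleton_self x)]
    exact Submodule.span_insert_zero
  have hfin : (s \ {y} : Set R).Finite := s.finite_toSet.sdiff
  calc (maximalIdeal (R ⧸ Ideal.span {x})).spanFinrank
    _ ≤ (f '' (s \ {y})).ncard :=
      hgen ▸ Submodule.spanFinrank_span_le_ncard_of_finite (hfin.image f)
    _ ≤ (s \ {y} : Set R).ncard := Set.ncard_image_le hfin
    _ < (s : Set R).ncard := Set.ncard_sdiff_singleton_lt_of_mem hy s.finite_toSet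
    _ = (maximalIdeal R).spanFinrank := by rw [Set.ncard_coe_finset, hcard]

end LocalRing

section RegularLocalRing

theorem IsRegularLocal.isRegularLocalRing {R : Type*} [CommRing R] [IsLocalRing R]
    [IsNoetherianRing R] (h : IsRegularLocal R) : IsRegularLocalRing R := by
  obtain ⟨s, hs, hcard⟩ := h
  refine .of_spanFinrank_maximalIdeal_le R ?_
  rw [← hs, ← hcard, Nat.cast_le, ← Set.ncard_coe_finset]
  exact Submodule.spanFinrank_span_le_ncard_of_finite s.finite_toSet

variable {R : Type*} [CommRing R] [IsRegularLocalRing R]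

theorem isRegularLocalRing_quotient_span_singleton {x : R} (hx : x ∈ maximalIdeal R)
    (hx2 : x ∉ maximalIdeal R ^ 2) : IsRegularLocalRing (R ⧸ Ideal.span {x}) := by
  have := isLocalRing_quotient_span_singleton hx
  refine .of_spanFinrank_maximalIdeal_le _ ?_
  have hlt := spanFinrank_maximalIdeal_quotient_span_singleton_lt hx hx2
  have hdim := ringKrullDim_le_ringKrullDim_quotient_add_card ({x} : Finset R)
    (by simpa [ringJacobson_eq_maximalIdeal] using hx)
  rw [Finset.coe_singleton, Finset.card_singleton, Nat.cast_one,
    ← IsRegularLocalRing.spanFinrank_maximalIdeal] at hdim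
  exact ENat.WithBot.add_le_add_one_right_iff.mp (le_trans (by exact_mod_cast hlt) hdim)

theorem isField_of_maximalIdeal_mem_minimalPrimes (h : maximalIdeal R ∈ minimalPrimes R) :
    IsField R := by
  have hrank := IsRegularLocalRing.spanFinrank_maximalIdeal (R := R)
  rw [← maximalIdeal_height_eq_ringKrullDim, Ideal.height_eq_zero_iff.mpr h] at hrank
  rw [isField_iff_maximalIdeal_eq, ← Submodule.spanFinrank_eq_zero_iff_eq_bot
    (maximalIdeal R).fg_of_isNoetherianRing]
  exact_mod_cast hrank

theorem isDomain_of_isRegularLocalRing (R : Type*) [CommRing R] [IsRegularLocalRing R] :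
    IsDomain R := by
  induction hn : (maximalIdeal R).spanFinrank using Nat.strong_induction_on generalizing R with
  | _ n ih =>
  by_cases hmin : maximalIdeal R ∈ minimalPrimes R
  · exact (isField_of_maximalIdeal_mem_minimalPrimes hmin).isDomain
  obtain ⟨x, hx, hx2, hxmin⟩ := exists_mem_maximalIdeal_notMem_sq_notMem_minimalPrimes hmin
  have := isRegularLocalRing_quotient_span_singleton hx hx2
  have : IsDomain (R ⧸ Ideal.span {x}) :=
    ih _ (hn ▸ spanFinrank_maximalIdeal_quotient_span_singleton_lt hx hx2) _ rfl
  exact isDomain_of_isPrime_span_singleton_of_forall_notMem_minimalPrimes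
    (maximalIdeal_le_jacobson _ hx) ((Ideal.Quotient.isDomain_iff_prime _).mp this) hxmin

theorem prime_of_mem_maximalIdeal_of_notMem_sq {x : R} (hx : x ∈ maximalIdeal R)
    (hx2 : x ∉ maximalIdeal R ^ 2) : Prime x := by
  have := isRegularLocalRing_quotient_span_singleton hx hx2
  have := isDomain_of_isRegularLocalRing (R ⧸ Ideal.span {x})
  exact (Ideal.span_singleton_prime fun h : x = 0 ↦ hx2 (h ▸ Ideal.zero_mem _)).mp
    ((Ideal.Quotient.isDomain_iff_prime _).mp this)

end RegularLocalRing

section AssociatedPrimes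

theorem dvd_of_prime_of_dvd_mul_of_not_dvd {M : Type*} [CommMonoidWithZero M]
    [IsLeftCancelMulZero M] {a d x y : M} (hx : Prime x) (ha : a ≠ 0) (had : ¬ a ∣ d)
    (hxd : a ∣ x * d) (hyd : a ∣ y * d) : x ∣ y := by
  obtain ⟨e, he⟩ := hxd
  obtain ⟨f, hf⟩ := hyd
  have hye : y * e = x * f := mul_left_cancel₀ ha <| by
    rw [mul_left_comm, ← he, mul_left_comm a, ← hf, mul_left_comm]
  refine (hx.dvd_or_dvd ⟨f, hye⟩).resolve_right fun ⟨e', he'⟩ ↦ had ⟨e', ?_⟩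
  exact mul_left_cancel₀ hx.ne_zero (by rw [he, he', mul_left_comm])

variable {R : Type*} [CommRing R]

theorem exists_forall_mem_iff_dvd_mul_of_mem_associatedPrimes [IsNoetherianRing R] {a : R}
    {p : Ideal R} (hp : p ∈ associatedPrimes R (R ⧸ Ideal.span {a})) :
    ∃ d, ∀ z, z ∈ p ↔ a ∣ z * d := by
  obtain ⟨-, d, rfl⟩ := isAssociatedPrime_iff.mp hp
  obtain ⟨d, rfl⟩ := Ideal.Quotient.mk_surjective d
  refine ⟨d, fun z ↦ ?_⟩
  rw [Submodule.mem_colon_singleton, Submodule.mem_bot, ← Ideal.mem_span_singleton,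
    ← Ideal.Quotient.eq_zero_iff_mem, map_mul]
  rfl

theorem height_maximalIdeal_le_one_of_mem_associatedPrimes [IsRegularLocalRing R] {a : R}
    (ha : a ≠ 0) (hm : maximalIdeal R ∈ associatedPrimes R (R ⧸ Ideal.span {a})) :
    (maximalIdeal R).height ≤ 1 := by
  have := isDomain_of_isRegularLocalRing R
  by_cases hsq : maximalIdeal R ≤ maximalIdeal R ^ 2
  · rw [isField_iff_maximalIdeal_eq.mp (isField_of_maximalIdeal_le_sq hsq), Ideal.height_bot]
    exact zero_le_one
  obtain ⟨x, hx, hx2⟩ := SetLike.not_le_iff_exists.mp hsq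
  have hprime := prime_of_mem_maximalIdeal_of_notMem_sq hx hx2
  obtain ⟨d, hd⟩ := exists_forall_mem_iff_dvd_mul_of_mem_associatedPrimes hm
  have had : ¬ a ∣ d := fun h ↦
    (maximalIdeal R).one_notMem ((hd 1).mpr (by rwa [one_mul]))
  have hle : maximalIdeal R ≤ Ideal.span {x} := fun y hy ↦ Ideal.mem_span_singleton.mpr <|
    dvd_of_prime_of_dvd_mul_of_not_dvd hprime ha had ((hd x).mp hx) ((hd y).mp hy)
  exact (Ideal.height_mono hle).trans (Ideal.height_span_singleton_le_one hprime.not_isUnit)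

open Module.associatedPrimes in
theorem maximalIdeal_mem_associatedPrimes_quotient_span_algebraMap {a : R} {p : Ideal R}
    [p.IsPrime] (hp : p ∈ associatedPrimes R (R ⧸ Ideal.span {a})) :
    maximalIdeal (Localization.AtPrime p) ∈ associatedPrimes (Localization.AtPrime p)
      (Localization.AtPrime p ⧸ Ideal.span {algebraMap R (Localization.AtPrime p) a}) := by
  have h := mem_associatedPrimes_of_comap_mem_associatedPrimes_of_isLocalizedModule
    p.primeCompl ((Ideal.span {a}).toLocalizedQuotient' (Localization.AtPrime p) p.primeCompl
      (Algebra.linearMap R (Localization.AtPrime p))) (maximalIdeal (Localization.AtPrime p))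
    (by rwa [← Ideal.under_def, Localization.AtPrime.under_maximalIdeal])
  rwa [Ideal.span, Submodule.localized'_span, Set.image_singleton] at h

theorem height_le_one_of_mem_associatedPrimes_quotient_span_singleton [IsRegularRing R] {a : R}
    (ha : a ∈ R⁰) {p : Ideal R} (hp : p ∈ associatedPrimes R (R ⧸ Ideal.span {a})) :
    p.height ≤ 1 := by
  have hprime : p.IsPrime := hp.isPrime
  have haA : algebraMap R (Localization.AtPrime p) a ≠ 0 := nonZeroDivisors.ne_zero
    (IsLocalization.map_nonZeroDivisors_le p.primeCompl _ (Submonoid.mem_map_of_mem _ ha))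
  have h := height_maximalIdeal_le_one_of_mem_associatedPrimes haA
    (maximalIdeal_mem_associatedPrimes_quotient_span_algebraMap hp)
  rwa [← WithBot.coe_le_coe, maximalIdeal_height_eq_ringKrullDim,
    IsLocalization.AtPrime.ringKrullDim_eq_height p, WithBot.coe_le_coe] at h

theorem dvd_of_dvd_mul_of_forall_notMem_associatedPrimes [IsNoetherianRing R] {a b : R}
    (hb : ∀ p ∈ associatedPrimes R (R ⧸ Ideal.span {a}), b ∉ p) {c : R} (hc : a ∣ b * c) :
    a ∣ c := by
  contrapose! hb
  have hzero : b ∈ {r : R | ∃ x : R ⧸ Ideal.span {a}, x ≠ 0 ∧ r • x = 0} := by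
    refine ⟨Ideal.Quotient.mk _ c, ?_, ?_⟩
    · rwa [Ne, Ideal.Quotient.eq_zero_iff_dvd]
    · rwa [← Ideal.Quotient.eq_zero_iff_dvd] at hc
  rw [← biUnion_associatedPrimes_eq_zero_divisors] at hzero
  simpa only [Set.mem_iUnion₂, exists_prop, SetLike.mem_coe] using hzero

end AssociatedPrimes

theorem stmt1_general {R : Type*} [CommRing R] [IsDomain R] [IsNoetherianRing R] {a b : R}
    (ha : a ≠ 0) (hass : ∀ p ∈ associatedPrimes R (R ⧸ Ideal.span {a}), p.height ≤ 1)
    (hdiv : ¬ ∃ (p : Ideal R) (hp : p.IsPrime),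
      Order.height (⟨p, hp⟩ : PrimeSpectrum R) = 1 ∧ a ∈ p ∧ b ∈ p) :
    (Ideal.span {C a * X + C b}).IsPrime := by
  refine isPrime_span_C_mul_X_add_C ha fun c ↦
    dvd_of_dvd_mul_of_forall_notMem_associatedPrimes fun p hp hbp ↦ ?_
  have hprime : p.IsPrime := hp.isPrime
  have hap : a ∈ p := by
    obtain ⟨d, hd⟩ := exists_forall_mem_iff_dvd_mul_of_mem_associatedPrimes hp
    exact (hd a).mpr (dvd_mul_right a d)
  have hheight : 1 ≤ p.height := by
    rw [Order.one_le_iff_ne_zero, Ne, Ideal.height_eq_zero_iff_eq_bot]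
    rintro rfl
    exact ha hap
  refine hdiv ⟨p, hprime, ?_, hap, hbp⟩
  rw [← PrimeSpectrum.height_eq_orderHeight]
  exact le_antisymm (hass p hp) hheight

/-- Let `R` be a Noetherian regular integral domain and `a, b` nonzero
elements of `R` such that no height-one prime ideal of `R` contains both `a` and `b`.
Then the ideal of `R[t]` generated by `a • t + b` is prime. -/
theorem stmt1 {R : Type*} [CommRing R] [IsDomain R] [IsNoetherianRing R]
    (hreg : ∀ (p : Ideal R) (hp : p.IsPrime), IsRegularLocal (@Localization.AtPrime R _ p hp))
    (a b : R) (ha : a ≠ 0) (hb : b ≠ 0)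
    (hdiv : ¬ ∃ (p : Ideal R) (hp : p.IsPrime),
      Order.height (⟨p, hp⟩ : PrimeSpectrum R) = 1 ∧ a ∈ p ∧ b ∈ p) :
    (Ideal.span {Polynomial.C a * Polynomial.X + Polynomial.C b}).IsPrime := by
  have : IsRegularRing R := isRegularRing_iff.mpr fun p hp ↦ (hreg p hp).isRegularLocalRing
  exact stmt1_general ha (fun _ ↦ height_le_one_of_mem_associatedPrimes_quotient_span_singleton
    (mem_nonZeroDivisors_of_ne_zero ha)) hdiv
end

section
/- Let R be an integral domain of finite type over an algebraically closed field k, let χ₁, …, χ_r be units in R, and suppose the k-linear subspace of R spanned by χ₁, …, χ_r has dimension at least 2. Then there exists a nonempty (dense) open subset W of affine r-space over k such that for every k-point a = (a₁,…,a_r) in W, the element Σ a_l χ_l is not a unit of R. -/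
/-!
If no `k`-combination of the `χ l` is a unit there is nothing to prove. Otherwise fix `c` such that
`u = ∑ l, c l • χ l` is a unit. A prime of `R` containing `∑ l, a l • χ l` is a point of the
incidence variety `∑ l, χ l * X l = 0` in `Spec R × 𝔸ⁿ` lying over `a`, so by Chevalley's theorem it
suffices that this variety dominates `𝔸ⁿ`. Since `u` is a unit, the trivial bundle `Spec R × 𝔸ⁿ`
retracts onto the incidence variety along `c`. If a polynomial `p` pulls back to zero under this
retraction, then `p (a - w • c) = 0` with `w = u⁻¹ * ∑ l, a l • χ l`. For `a` outside the proper
subspace where `w` is algebraic over `k`, hence a scalar, this forces `p (a + T • c) = 0` as a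
polynomial in `T`, and in particular `p a = 0`.
-/

open MvPolynomial

section Chevalley

open PrimeSpectrum

variable {A : Type*} [CommRing A] [IsDomain A]

theorem exists_basicOpen_subset_of_isConstructible {s : Set (PrimeSpectrum A)}
    (hs : Topology.IsConstructible s) (hbot : ⊥ ∈ s) :
    ∃ g : A, g ≠ 0 ∧ (basicOpen g : Set (PrimeSpectrum A)) ⊆ s := by
  obtain ⟨D, rfl⟩ := exists_constructibleSetData_iff.mpr hs
  obtain ⟨B, hBg, hBD, hBf⟩ : ∃ B : BasicConstructibleSetData A,
      (∀ i, B.g i = 0) ∧ B ∈ D ∧ B.f ≠ 0 := by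
    simpa [ConstructibleSetData.toSet, BasicConstructibleSetData.toSet, mem_zeroLocus,
      Set.range_subset_iff] using hbot
  refine ⟨B.f, hBf, fun p hp ↦ Set.mem_biUnion hBD ⟨?_, ?_⟩⟩
  · simp [mem_zeroLocus, Set.range_subset_iff, hBg]
  · simpa [mem_zeroLocus] using hp

theorem exists_basicOpen_subset_range_comap {S : Type*} [CommRing S] {f : A →+* S}
    (hf : f.FinitePresentation) (hinj : Function.Injective f) :
    ∃ g : A, g ≠ 0 ∧ (basicOpen g : Set (PrimeSpectrum A)) ⊆ Set.range (comap f) := by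
  refine exists_basicOpen_subset_of_isConstructible (isConstructible_range_comap hf) ?_
  obtain ⟨q, hq, hqf⟩ := Ideal.exists_comap_eq_of_mem_minimalPrimes_of_injective hinj ⊥
    (by simp [IsDomain.minimalPrimes_eq_singleton_bot])
  exact ⟨⟨q, hq⟩, PrimeSpectrum.ext hqf⟩

end Chevalley

theorem algHom_finitePresentation_of_finiteType {k A B : Type*} [CommRing k] [IsNoetherianRing k]
    [CommRing A] [CommRing B] [Algebra k A] [Algebra k B] [Algebra.FiniteType k A]
    [hB : Algebra.FiniteType k B] (f : A →ₐ[k] B) : f.toRingHom.FinitePresentation := by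
  have : IsNoetherianRing A := Algebra.FiniteType.isNoetherianRing k A
  refine RingHom.FinitePresentation.of_finiteType.mp
    (RingHom.FiniteType.of_comp_finiteType (f := algebraMap k A) ?_)
  rw [AlgHom.toRingHom_eq_coe, f.comp_algebraMap]
  exact RingHom.finiteType_algebraMap.mpr hB

theorem isIntegrallyClosedIn_of_isAlgClosed (k R : Type*) [Field k] [IsAlgClosed k]
    [CommRing R] [IsDomain R] [Algebra k R] : IsIntegrallyClosedIn k R := by
  refine isIntegrallyClosedIn_iff.mpr ⟨FaithfulSMul.algebraMap_injective k R, fun {x} hx ↦ ?_⟩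
  obtain ⟨y, hy⟩ := (IsAlgClosed.algebraMap_bijective_of_isIntegral
    (k := k) (K := integralClosure k R)).2 ⟨x, hx⟩
  exact ⟨y, congr_arg Subtype.val hy⟩

section Vanishing

variable {k ι : Type*}

theorem mvPolynomial_eq_zero_of_forall_notMem_submodule [Field k] [Infinite k] [Finite ι]
    {N : Submodule k (ι → k)} (hN : N ≠ ⊤) {p : MvPolynomial ι k}
    (hp : ∀ a ∉ N, eval a p = 0) : p = 0 := by
  classical
  cases nonempty_fintype ι
  obtain ⟨f, hf, hNf⟩ := N.exists_le_ker_of_lt_top hN.lt_top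
  let q : MvPolynomial ι k := ∑ l, C (f fun j ↦ if l = j then 1 else 0) * X l
  have hq (a : ι → k) : eval a q = f a := by
    simp [q, f.pi_apply_eq_sum_univ a, mul_comm]
  have hpq : p * q = 0 := MvPolynomial.funext fun a ↦ by
    by_cases ha : a ∈ N
    · simp [hq, LinearMap.mem_ker.mp (hNf ha)]
    · simp [hp a ha]
  refine (mul_eq_zero.mp hpq).resolve_right fun hq0 ↦ hf (LinearMap.ext fun a ↦ ?_)
  rw [← hq, hq0, map_zero, LinearMap.zero_apply]

theorem eval_eq_zero_of_aeval_add_smul_eq_zero {R : Type*} [CommRing k] [CommRing R] [Algebra k R]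
    {w : R} (hw : Transcendental k w) {p : MvPolynomial ι k} (a c : ι → k)
    (hp : aeval (fun l ↦ algebraMap k R (a l) + c l • w) p = 0) : eval a p = 0 := by
  let q : Polynomial k := aeval (fun l ↦ Polynomial.C (a l) + c l • Polynomial.X) p
  have hq : q = 0 := transcendental_iff.mp hw q <| by
    simpa [q, ← AlgHom.comp_apply, comp_aeval] using hp
  have hq_zero : Polynomial.aeval (0 : k) q = aeval a p := by
    simp [q, ← AlgHom.comp_apply, comp_aeval]
  rw [← coe_aeval_eq_eval, RingHom.coe_coe, ← hq_zero, hq, map_zero]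

end Vanishing

section HyperplaneRetraction

variable {k R ι : Type*} [CommRing k] [CommRing R] [Algebra k R] [Fintype ι] {χ e : ι → R}

variable (k χ e) in
/-- The comorphism of the map from affine space over `R` to affine space over `k` which sends `x` to
`x - (∑ j, χ j * x j) • e`. When `∑ j, χ j * e j = 1`, this is the retraction along `e` onto the
incidence variety `∑ j, χ j * x j = 0`, followed by the projection to affine space over `k`. Using
it instead of the quotient by `∑ j, χ j * X j` keeps the target a polynomial ring. -/
noncomputable def hyperplaneRetraction : MvPolynomial ι k →ₐ[k] MvPolynomial ι R :=
  aeval fun l ↦ X l - C (e l) * ∑ j, C (χ j) * X j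

theorem aeval_hyperplaneRetraction (b : ι → R) (p : MvPolynomial ι k) :
    aeval b (hyperplaneRetraction k χ e p) = aeval (fun l ↦ b l - e l * ∑ j, χ j * b j) p := by
  suffices h : ((aeval b).restrictScalars k).comp (hyperplaneRetraction k χ e) =
      aeval fun l ↦ b l - e l * ∑ j, χ j * b j from DFunLike.congr_fun h p
  ext l
  simp [hyperplaneRetraction]

theorem sum_C_mul_hyperplaneRetraction_X (he : ∑ l, χ l * e l = 1) :
    ∑ l, C (χ l) * hyperplaneRetraction k χ e (X l) = 0 := by
  have he' : ∑ l, C (χ l) * C (e l) = (1 : MvPolynomial ι R) := by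
    simp only [← map_mul, ← map_sum, he, map_one]
  simp only [hyperplaneRetraction, aeval_X, mul_sub, Finset.sum_sub_distrib, ← mul_assoc]
  rw [← Finset.sum_mul, he', one_mul, sub_self]

theorem C_sum_smul_mem_of_ker_eval_le_comap_hyperplaneRetraction (he : ∑ l, χ l * e l = 1)
    {a : ι → k} {I : Ideal (MvPolynomial ι R)}
    (hI : RingHom.ker (eval a) ≤ I.comap (hyperplaneRetraction k χ e)) :
    C (∑ l, a l • χ l) ∈ I := by
  set φ := hyperplaneRetraction k χ e
  have hφ (l : ι) : φ (C (a l)) = C (algebraMap k R (a l)) := by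
    simp [φ, hyperplaneRetraction]
  have hsum : C (∑ l, a l • χ l) = ∑ l, C (χ l) * φ (C (a l) - X l) := by
    simp only [map_sub, mul_sub, Finset.sum_sub_distrib, φ,
      sum_C_mul_hyperplaneRetraction_X he, sub_zero]
    simp [hφ, φ, Algebra.smul_def, mul_comm]
  rw [hsum]
  exact I.sum_mem fun l _ ↦ I.mul_mem_left _ (hI (by simp [RingHom.mem_ker]))

end HyperplaneRetraction

section Dominance

variable {k R ι : Type*} [Field k] [CommRing R] [Algebra k R] [Fintype ι] {χ : ι → R}

theorem comap_linearCombination_span_singleton_ne_top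
    (hdim : 2 ≤ Module.finrank k (Submodule.span k (Set.range χ))) (x : R) :
    (Submodule.span k {x}).comap (Fintype.linearCombination k χ) ≠ ⊤ := fun htop ↦ by
  have hle : Submodule.span k (Set.range χ) ≤ Submodule.span k {x} := by
    rw [← Fintype.range_linearCombination]
    exact LinearMap.range_le_iff_comap.mpr htop
  have hrank : Module.finrank k (Submodule.span k (Set.range χ)) ≤ 1 := by
    simpa using (Submodule.finrank_mono hle).trans (finrank_span_le_card {x})
  omega

theorem hyperplaneRetraction_injective [Infinite k] [IsIntegrallyClosedIn k R]
    (hdim : 2 ≤ Module.finrank k (Submodule.span k (Set.range χ))) (c : ι → k) (v : Rˣ) :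
    Function.Injective (hyperplaneRetraction k χ fun l ↦ c l • (v : R)) := by
  refine (injective_iff_map_eq_zero _).mpr fun p hp ↦
    mvPolynomial_eq_zero_of_forall_notMem_submodule
      (comap_linearCombination_span_singleton_ne_top hdim (↑v⁻¹ : R)) fun a ha ↦ ?_
  let w : R := -(v * ∑ l, a l • χ l)
  have hw : Transcendental k w := fun hw ↦ ha <| by
    obtain ⟨y, hy⟩ := IsIntegralClosure.isIntegral_iff (A := k) |>.mp hw.isIntegral
    refine Submodule.mem_span_singleton.mpr ⟨-y, ?_⟩
    simp [Algebra.smul_def, hy, w, Fintype.linearCombination_apply, mul_right_comm]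
  have hline (l : ι) : algebraMap k R (a l) + c l • w =
      algebraMap k R (a l) - c l • (v : R) * ∑ j, χ j * algebraMap k R (a j) := by
    simp only [w, Algebra.smul_def, mul_comm (χ _)]
    ring
  refine eval_eq_zero_of_aeval_add_smul_eq_zero hw a c ?_
  simp only [hline]
  rw [← aeval_hyperplaneRetraction (e := fun l ↦ c l • (v : R)), hp, map_zero]

end Dominance

theorem stmt2_general {k R ι : Type*} [Field k] [Infinite k] [CommRing R] [Algebra k R]
    [Algebra.FiniteType k R] [IsIntegrallyClosedIn k R] [Fintype ι] (χ : ι → R)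
    (hdim : 2 ≤ Module.finrank k (Submodule.span k (Set.range χ))) :
    ∃ g : MvPolynomial ι k, g ≠ 0 ∧
      ∀ a : ι → k, eval a g ≠ 0 → ¬ IsUnit (∑ l, a l • χ l) := by
  by_cases! hunit : ∀ c : ι → k, ¬ IsUnit (∑ l, c l • χ l)
  · exact ⟨1, one_ne_zero, fun a _ ↦ hunit a⟩
  obtain ⟨c, u, hu⟩ := hunit
  have he : ∑ l, χ l * c l • (↑u⁻¹ : R) = 1 := by
    simp only [mul_smul_comm, ← smul_mul_assoc, ← Finset.sum_mul, ← hu, u.mul_inv]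
  have : Algebra.FiniteType k (MvPolynomial ι R) := .trans ‹_› inferInstance
  obtain ⟨g, hg, hrange⟩ := exists_basicOpen_subset_range_comap
    (algHom_finitePresentation_of_finiteType _) (hyperplaneRetraction_injective hdim c u⁻¹)
  refine ⟨g, hg, fun a ha hau ↦ ?_⟩
  obtain ⟨q, hq⟩ := @hrange ⟨RingHom.ker (eval a), RingHom.ker_isPrime _⟩ ha
  have hker : RingHom.ker (eval a) ≤ q.asIdeal.comap _ :=
    (congr_arg PrimeSpectrum.asIdeal hq).ge
  exact q.2.ne_top (Ideal.eq_top_of_isUnit_mem _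
    (C_sum_smul_mem_of_ker_eval_le_comap_hyperplaneRetraction he hker) (hau.map C))

/-- Let `R` be an integral domain of finite type over an algebraically
closed field `k`, let `χ₁, …, χ_r` be units in `R` whose `k`-linear span has dimension
at least `2`. Then there is a nonempty Zariski-open subset `W` of affine `r`-space over
`k` (here: the nonvanishing locus of some nonzero polynomial `g`) such that for every
`k`-point `a ∈ W`, the element `∑ aₗ χₗ` is not a unit of `R`. -/
theorem stmt2 {k : Type*} [Field k] [IsAlgClosed k]
    {R : Type*} [CommRing R] [IsDomain R] [Algebra k R] (hft : Algebra.FiniteType k R)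
    (r : ℕ) (χ : Fin r → Rˣ)
    (hdim : 2 ≤ Module.finrank k (Submodule.span k (Set.range fun l => (χ l : R)))) :
    ∃ g : MvPolynomial (Fin r) k, g ≠ 0 ∧
      ∀ a : Fin r → k, MvPolynomial.eval a g ≠ 0 →
        ¬ IsUnit (∑ l, a l • (χ l : R)) := by
  have : IsIntegrallyClosedIn k R := isIntegrallyClosedIn_of_isAlgClosed k R
  exact stmt2_general (fun l ↦ (χ l : R)) hdim
end

section
/- Let f : X → Y be a quasi-compact morphism of schemes, let Z be the scheme-theoretic image of f, and let V ⊆ Y be an open subscheme. Then Z ∩ V (the open subscheme of Z lying over V) is the scheme-theoretic image of the restricted morphism f|_{f⁻¹(V)} : f⁻¹(V) → V. -/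
open CategoryTheory Limits AlgebraicGeometry

/-- `Z` (given by the closed immersion `i : Z ⟶ Y`) is the scheme-theoretic image of
`f : X ⟶ Y`:  it is the smallest closed subscheme of `Y` through which `f` factors. -/
structure IsSchemeTheoreticImage {X Y Z : Scheme} (f : X ⟶ Y) (i : Z ⟶ Y) : Prop where
  isClosedImmersion : IsClosedImmersion i
  factors : ∃ g : X ⟶ Z, g ≫ i = f
  isLeast : ∀ (W : Scheme) (j : W ⟶ Y), IsClosedImmersion j →
    (∃ h : X ⟶ W, h ≫ j = f) → ∃ l : Z ⟶ W, l ≫ j = i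

/-!
A closed immersion `i : Z ⟶ Y` through which `f` factors as `g ≫ i` is the scheme-theoretic image
of `f` exactly when `g` is scheme-theoretically dominant, i.e. has zero kernel. Base change along
`j : U ⟶ Y` replaces `g` by its base change along the projection `Z ×[Y] U ⟶ Z`, which is flat when
`j` is, and a quasi-compact scheme-theoretically dominant morphism stays so after flat base change.
-/

theorem IsSchemeTheoreticImage.isSchemeTheoreticallyDominant {X Y Z : Scheme} {g : X ⟶ Z}
    {i : Z ⟶ Y} (h : IsSchemeTheoreticImage (g ≫ i) i) : IsSchemeTheoreticallyDominant g := by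
  have := h.isClosedImmersion
  obtain ⟨s, hs⟩ := h.isLeast g.image (g.imageι ≫ i) inferInstance ⟨g.toImage, by simp⟩
  have s_section : s ≫ g.imageι = 𝟙 Z := by simpa [← cancel_mono i] using hs
  refine ⟨le_bot_iff.mp ?_⟩
  calc g.ker = g.imageι.ker := (Scheme.IdealSheafData.ker_subschemeι _).symm
    _ ≤ (s ≫ g.imageι).ker := Scheme.Hom.le_ker_comp s g.imageι
    _ = ⊥ := by rw [s_section, Scheme.Hom.ker_eq_bot_of_isIso]

theorem isSchemeTheoreticImage_comp {X Y Z : Scheme} (g : X ⟶ Z) (i : Z ⟶ Y)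
    [IsSchemeTheoreticallyDominant g] [IsClosedImmersion i] :
    IsSchemeTheoreticImage (g ≫ i) i where
  isClosedImmersion := inferInstance
  factors := ⟨g, rfl⟩
  isLeast W j _ := by
    rintro ⟨k, hk⟩
    have hker : j.ker ≤ i.ker :=
      calc j.ker ≤ (k ≫ j).ker := Scheme.Hom.le_ker_comp k j
        _ = g.ker.map i := by rw [hk, Scheme.Hom.ker_comp]
        _ = i.ker := by rw [g.ker_eq_bot, Scheme.IdealSheafData.map_bot]
    exact ⟨IsClosedImmersion.lift j i hker, IsClosedImmersion.lift_fac j i hker⟩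

theorem stmt4_general {X Y Z U : Scheme} (f : X ⟶ Y) [QuasiCompact f] (i : Z ⟶ Y)
    (h : IsSchemeTheoreticImage f i) (j : U ⟶ Y) [Flat j] :
    IsSchemeTheoreticImage (pullback.snd f j) (pullback.snd i j) := by
  have := h.isClosedImmersion
  obtain ⟨g, rfl⟩ := h.factors
  have := h.isSchemeTheoreticallyDominant
  have : QuasiCompact g := .of_comp g i
  let g' : pullback (g ≫ i) j ⟶ pullback i j :=
    pullback.lift (pullback.fst _ _ ≫ g) (pullback.snd _ _) (by simp [pullback.condition])
  have g'_snd : g' ≫ pullback.snd i j = pullback.snd (g ≫ i) j := pullback.lift_snd _ _ _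
  have g'_isPullback : IsPullback g' (pullback.fst _ _) (pullback.fst i j) g :=
    .of_right (g'_snd ▸ (IsPullback.of_hasPullback (g ≫ i) j).flip) (pullback.lift_fst _ _ _)
      (IsPullback.of_hasPullback i j).flip
  have : IsSchemeTheoreticallyDominant g' := .of_isPullback g'_isPullback.flip
  rw [← g'_snd]
  exact isSchemeTheoreticImage_comp g' (pullback.snd i j)

/-- Let `f : X ⟶ Y` be a quasi-compact morphism of schemes, `Z` the
scheme-theoretic image of `f` and `V ⊆ Y` an open subscheme.  Then `Z ∩ V` is the
scheme-theoretic image of the restriction `f⁻¹(V) ⟶ V`. -/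
theorem stmt4 {X Y Z : Scheme} (f : X ⟶ Y) [QuasiCompact f] (i : Z ⟶ Y)
    (h : IsSchemeTheoreticImage f i) (V : Y.Opens) :
    IsSchemeTheoreticImage (pullback.snd f V.ι) (pullback.snd i V.ι) :=
  stmt4_general f i h V.ι
end
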